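/- arXiv:math-ph/0303021 — 3 statements merged into one kernel-verified Lean document; each statement's English description precedes it below -/
import Mathlib

section
/- Fix j with 0 ≤ j ≤ n. Let ρ be a C^∞ everywhere positive function on X with L^T ρ = 0 and ∫_X ρ dx = 1, let μ = ρ dx, and define F(p,q,r₁,rₙ) = −R_j(p,q,r₁,rₙ) − log ρ(−p,q,r₁,rₙ). Assume that L F and each |∇_{r_i} F|², i ∈ {1,n}, are μ-integrable and that ∫ (L F) dμ = 0. Then the mean entropy production in the stationary state is nonnegative: ∫ σ_j dμ = γ Σ_{i∈{1,n}} T_i ∫ |∇_{r_i} F|² dμ ≥ 0. -/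
open scoped BigOperators

noncomputable section

/-- `Vc d` : vectors in ℝ^d. -/
abbrev Vc (d : ℕ) := Fin d → ℝ
/-- Configurations of `m` oscillators. -/
abbrev Cfg (m d : ℕ) := Fin m → Vc d
/-- Phase space X = p × q × r₁ × rₙ (for a chain of `m` oscillators). -/
abbrev Phs (m d : ℕ) := Cfg m d × Cfg m d × Vc d × Vc d

variable {m d : ℕ}

/-- unit coordinate vector in the p-block -/
def eP (i : Fin m) (a : Fin d) : Phs m d := (Pi.single i (Pi.single a 1), 0, 0, 0)
/-- unit coordinate vector in the q-block -/
def eQ (i : Fin m) (a : Fin d) : Phs m d := (0, Pi.single i (Pi.single a 1), 0, 0)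
/-- unit coordinate vector in the r₁-block -/
def eR1 (a : Fin d) : Phs m d := (0, 0, Pi.single a 1, 0)
/-- unit coordinate vector in the rₙ-block -/
def eRn (a : Fin d) : Phs m d := (0, 0, 0, Pi.single a 1)

/-- directional (partial) derivative -/
def PD (f : Phs m d → ℝ) (x v : Phs m d) : ℝ := fderiv ℝ f x v

variable {n : ℕ}

/-- total potential V(q) = Σᵢ U⁽¹⁾(qᵢ) + Σᵢ U⁽²⁾(qᵢ − qᵢ₊₁) of a chain of n+2 oscillators -/
def Vtot (U1 U2 : Vc d → ℝ) (q : Cfg (n+2) d) : ℝ :=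
  (∑ i, U1 (q i)) + ∑ i : Fin (n+1), U2 (q i.castSucc - q i.succ)

/-- the generator L of the dynamics of the chain coupled to two reservoirs -/
def gen (γ lam T1 Tn : ℝ) (U1 U2 : Vc d → ℝ) (f : Phs (n+2) d → ℝ) (x : Phs (n+2) d) : ℝ :=
  (γ * (T1 * ∑ a, PD (fun y => PD f y (eR1 a)) x (eR1 a)
        - ∑ a, x.2.2.1 a * PD f x (eR1 a))
    + lam * ((∑ a, x.1 0 a * PD f x (eR1 a)) - ∑ a, x.2.2.1 a * PD f x (eP 0 a)))
  + (γ * (Tn * ∑ a, PD (fun y => PD f y (eRn a)) x (eRn a)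
        - ∑ a, x.2.2.2 a * PD f x (eRn a))
    + lam * ((∑ a, x.1 (Fin.last (n+1)) a * PD f x (eRn a))
        - ∑ a, x.2.2.2 a * PD f x (eP (Fin.last (n+1)) a)))
  + ∑ i, ((∑ a, x.1 i a * PD f x (eQ i a))
        - ∑ a, fderiv ℝ (Vtot U1 U2) x.2.1 (Pi.single i (Pi.single a 1)) * PD f x (eP i a))

/-- the formal adjoint Lᵀ of L with respect to Lebesgue measure -/
def genT (γ lam T1 Tn : ℝ) (U1 U2 : Vc d → ℝ) (g : Phs (n+2) d → ℝ) (x : Phs (n+2) d) : ℝ :=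
  (γ * (T1 * ∑ a, PD (fun y => PD g y (eR1 a)) x (eR1 a)
        + ∑ a, PD (fun y => y.2.2.1 a * g y) x (eR1 a))
    - lam * ((∑ a, x.1 0 a * PD g x (eR1 a)) - ∑ a, x.2.2.1 a * PD g x (eP 0 a)))
  + (γ * (Tn * ∑ a, PD (fun y => PD g y (eRn a)) x (eRn a)
        + ∑ a, PD (fun y => y.2.2.2 a * g y) x (eRn a))
    - lam * ((∑ a, x.1 (Fin.last (n+1)) a * PD g x (eRn a))
        - ∑ a, x.2.2.2 a * PD g x (eP (Fin.last (n+1)) a)))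
  - ∑ i, ((∑ a, x.1 i a * PD g x (eQ i a))
        - ∑ a, fderiv ℝ (Vtot U1 U2) x.2.1 (Pi.single i (Pi.single a 1)) * PD g x (eP i a))

/-- time reversal (Jf)(p,q,r₁,rₙ) = f(−p,q,r₁,rₙ) -/
def Jop (f : Phs m d → ℝ) : Phs m d → ℝ := fun x => f (-x.1, x.2.1, x.2.2.1, x.2.2.2)

/-- nat-indexed access to the oscillator coordinates (junk value outside the range) -/
def cfgNat (q : Cfg (n+2) d) (k : ℕ) : Vc d := if h : k < n + 2 then q ⟨k, h⟩ else 0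

/-- local energies H_k, 0-indexed: k ∈ {0, …, n+1} -/
def Hloc (U1 U2 : Vc d → ℝ) (k : ℕ) (x : Phs (n+2) d) : ℝ :=
  (∑ a, (cfgNat x.1 k a) ^ 2) / 2 + U1 (cfgNat x.2.1 k)
  + (if k = 0 then 0 else (1/2) * U2 (cfgNat x.2.1 (k-1) - cfgNat x.2.1 k))
  + (if k = n + 1 then 0 else (1/2) * U2 (cfgNat x.2.1 k - cfgNat x.2.1 (k+1)))

/-- heat flows Φ_j, j ∈ {0, …, n+2}: Φ_0 = −λr₁·p_0 is the flow from the left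
reservoir into the chain, Φ_{n+2} = λrₙ·p_{n+1} the flow into the right reservoir,
and for 1 ≤ j ≤ n+1, Φ_j is the flow from the (0-indexed) oscillator j−1 to the
oscillator j. -/
def heatFlow (lam : ℝ) (U2 : Vc d → ℝ) (j : ℕ) (x : Phs (n+2) d) : ℝ :=
  if j = 0 then - lam * ∑ a, x.2.2.1 a * x.1 0 a
  else if j = n + 2 then lam * ∑ a, x.2.2.2 a * x.1 (Fin.last (n+1)) a
  else ∑ a, ((cfgNat x.1 (j-1) a + cfgNat x.1 j a) / 2)
        * fderiv ℝ U2 (cfgNat x.2.1 (j-1) - cfgNat x.2.1 j) (Pi.single a 1)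

/-- entropy production σ_j = (1/Tₙ − 1/T₁) Φ_j -/
def sigmaEP (lam T1 Tn : ℝ) (U2 : Vc d → ℝ) (j : ℕ) (x : Phs (n+2) d) : ℝ :=
  (1 / Tn - 1 / T1) * heatFlow lam U2 j x

/-- two-temperatures Gibbs exponent R_j, j ∈ {0, …, n+2}: the first j oscillators
are weighted with 1/T₁, the remaining ones with 1/Tₙ. -/
def Rj (T1 Tn : ℝ) (U1 U2 : Vc d → ℝ) (j : ℕ) (x : Phs (n+2) d) : ℝ :=
  (1 / T1) * ((∑ a, (x.2.2.1 a) ^ 2) / 2 + ∑ k ∈ Finset.range j, Hloc U1 U2 k x)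
  + (1 / Tn) * ((∑ k ∈ Finset.Ico j (n+2), Hloc U1 U2 k x) + (∑ a, (x.2.2.2 a) ^ 2) / 2)

open MeasureTheory

/-!
With `J` the time reversal, the key identity is `e^{R_j} J Lᵀ J e^{-R_j} = L - σ_j`. The Gibbs
weight turns the adjoint of each Ornstein–Uhlenbeck part of `L` into that part itself (detailed
balance), `J` reverses the Hamiltonian vector field, and `σ_j` is the derivative of `R_j` along
that field: the energy balances `Φ_k - Φ_{k+1}` of the oscillators telescope, and only the flow
through the place where the two temperatures meet survives. Since `J ρ = e^{-R_j} e^{-F}`,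
stationarity of `ρ` reads `(L - σ_j) e^{-F} = 0`, and expanding `L e^{-F}` by the chain rule gives
the pointwise identity `σ_j = γ ∑ Tᵢ |∇_{rᵢ} F|² - L F`, whose mean is the claim.
-/

section Calculus

variable {E ι : Type*} [NormedAddCommGroup E] [NormedSpace ℝ E] [Fintype ι] {R f F : E → ℝ} {x : E}

lemma hasDerivAt_add_smul (hf : DifferentiableAt ℝ f x) (v : E) :
    HasDerivAt (fun t : ℝ => f (x + t • v)) (fderiv ℝ f x v) 0 :=
  hf.hasFDerivAt.hasLineDerivAt v

lemma fderiv_exp_neg_apply (hF : DifferentiableAt ℝ F x) (v : E) :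
    fderiv ℝ (fun y => Real.exp (-F y)) x v = Real.exp (-F x) * -fderiv ℝ F x v := by
  rw [hF.hasFDerivAt.fun_neg.exp.fderiv, smul_apply, neg_apply, smul_eq_mul]

lemma fderiv_exp_neg_mul_apply (hR : DifferentiableAt ℝ R x) (hf : DifferentiableAt ℝ f x)
    (v : E) : fderiv ℝ (fun y => Real.exp (-R y) * f y) x v
      = Real.exp (-R x) * (fderiv ℝ f x v - fderiv ℝ R x v * f x) := by
  rw [(hR.hasFDerivAt.fun_neg.exp.fun_mul hf.hasFDerivAt).fderiv]
  simp only [add_apply, smul_apply, neg_apply, smul_eq_mul]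
  ring

lemma differentiable_fderiv_apply (hf : ContDiff ℝ 2 f) (v : E) :
    Differentiable ℝ (fun y => fderiv ℝ f y v) :=
  ((hf.fderiv_right (m := 1) le_rfl).differentiable one_ne_zero).clm_apply (differentiable_const v)

lemma hasDerivAt_half_sum_sq_add_smul (u w : ι → ℝ) :
    HasDerivAt (fun t : ℝ => (∑ a, (u + t • w) a ^ 2) / 2) (∑ a, u a * w a) 0 := by
  have coord (a : ι) : HasDerivAt (fun t : ℝ => (u a + t * w a) ^ 2) (2 * (u a * w a)) 0 :=
    ((((hasDerivAt_id (0 : ℝ)).mul_const (w a)).const_add (u a)).fun_pow 2).congr_deriv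
      (by simp only [id, zero_mul, add_zero, Nat.cast_ofNat, one_mul]; ring)
  refine ((HasDerivAt.fun_sum fun a _ => coord a).div_const 2).congr_deriv ?_
  rw [← Finset.mul_sum]
  ring

lemma sum_mul_apply_single [DecidableEq ι] (L : (ι → ℝ) →L[ℝ] ℝ) (v : ι → ℝ) :
    ∑ a, v a * L (Pi.single a 1) = L v := by
  conv_rhs => rw [pi_eq_sum_univ' v, map_sum]
  simp only [map_smul, smul_eq_mul]

end Calculus

section SingleSums

variable {M N : Type*} [Zero M] [AddCommMonoid N] {A : ℕ → M → N}

lemma sum_single_castSucc (hA : ∀ i, A i 0 = 0) (k : Fin (n + 2)) (u : M) :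
    ∑ i : Fin (n + 1), A i ((Pi.single k u : Fin (n + 2) → M) i.castSucc)
      = if (k : ℕ) = n + 1 then 0 else A k u := by
  induction k using Fin.lastCases with
  | last =>
    rw [if_pos (Fin.val_last _)]
    exact Finset.sum_eq_zero fun i _ => by
      rw [Pi.single_eq_of_ne (Fin.castSucc_lt_last i).ne, hA]
  | cast k =>
    rw [Fin.val_castSucc, if_neg k.isLt.ne, Fintype.sum_eq_single k fun i hi => by
      rw [Pi.single_eq_of_ne ((Fin.castSucc_injective _).ne hi), hA], Pi.single_eq_same]

lemma sum_single_succ (hA : ∀ i, A i 0 = 0) (k : Fin (n + 2)) (u : M) :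
    ∑ i : Fin (n + 1), A i ((Pi.single k u : Fin (n + 2) → M) i.succ)
      = if (k : ℕ) = 0 then 0 else A (k - 1) u := by
  induction k using Fin.cases with
  | zero =>
    rw [if_pos (Fin.val_zero _)]
    exact Finset.sum_eq_zero fun i _ => by rw [Pi.single_eq_of_ne (Fin.succ_ne_zero i), hA]
  | succ k =>
    rw [Fin.val_succ, if_neg k.val.succ_ne_zero, Fintype.sum_eq_single k fun i hi => by
      rw [Pi.single_eq_of_ne ((Fin.succ_injective _).ne hi), hA], Pi.single_eq_same,
      Nat.add_sub_cancel]

end SingleSums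

section OrnsteinUhlenbeck

variable {E ι : Type*} [NormedAddCommGroup E] [NormedSpace ℝ E] [Fintype ι]

/-- The Ornstein–Uhlenbeck operator `T Δ_r − r · ∇_r` at temperature `T` in the variables with
coordinate vectors `e a` and coordinate functions `r a`. -/
def ornsteinUhlenbeck (T : ℝ) (e : ι → E) (r : ι → E →L[ℝ] ℝ) (f : E → ℝ) (x : E) : ℝ :=
  T * ∑ a, fderiv ℝ (fun y => fderiv ℝ f y (e a)) x (e a) - ∑ a, r a x * fderiv ℝ f x (e a)

/-- The formal Lebesgue adjoint `g ↦ T Δ_r g + div_r (r g)` of `ornsteinUhlenbeck`. -/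
def ornsteinUhlenbeckAdjoint (T : ℝ) (e : ι → E) (r : ι → E →L[ℝ] ℝ) (g : E → ℝ) (x : E) : ℝ :=
  T * ∑ a, fderiv ℝ (fun y => fderiv ℝ g y (e a)) x (e a)
    + ∑ a, fderiv ℝ (fun y => r a y * g y) x (e a)

variable {T : ℝ} {e : ι → E} {r : ι → E →L[ℝ] ℝ} {R f F : E → ℝ}

lemma ornsteinUhlenbeckAdjoint_comp_equiv (J : E ≃L[ℝ] E) (he : ∀ a, J (e a) = e a)
    (hr : ∀ a y, r a (J y) = r a y) (g : E → ℝ) (x : E) :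
    ornsteinUhlenbeckAdjoint T e r (g ∘ J) x = ornsteinUhlenbeckAdjoint T e r g (J x) := by
  have chain (h : E → ℝ) (y : E) (a : ι) :
      fderiv ℝ (fun z => h (J z)) y (e a) = fderiv ℝ h (J y) (e a) := by
    rw [← Function.comp_def, J.comp_right_fderiv, ContinuousLinearMap.comp_apply,
      ContinuousLinearEquiv.coe_coe, he]
  have hdiv (a : ι) : fderiv ℝ (fun y => r a y * g (J y)) x (e a)
      = fderiv ℝ (fun y => r a y * g y) (J x) (e a) := by
    rw [← chain (fun y => r a y * g y)]
    simp only [hr]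
  have hlap (a : ι) : fderiv ℝ (fun y => fderiv ℝ (fun z => g (J z)) y (e a)) x (e a)
      = fderiv ℝ (fun y => fderiv ℝ g y (e a)) (J x) (e a) := by
    rw [← chain (fun y => fderiv ℝ g y (e a))]
    simp only [chain]
  simp only [ornsteinUhlenbeckAdjoint, Function.comp_def, hlap, hdiv]

lemma ornsteinUhlenbeckAdjoint_exp_neg_mul (hT : T ≠ 0) (hR : Differentiable ℝ R)
    (hRe : ∀ y a, fderiv ℝ R y (e a) = r a y / T) (hf : ContDiff ℝ 2 f) (x : E) :
    ornsteinUhlenbeckAdjoint T e r (fun y => Real.exp (-R y) * f y) x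
      = Real.exp (-R x) * ornsteinUhlenbeck T e r f x := by
  set g : E → ℝ := fun y => Real.exp (-R y) * f y
  have hfd : Differentiable ℝ f := hf.differentiable two_ne_zero
  have hg : Differentiable ℝ g := by fun_prop
  have hD (a : ι) : Differentiable ℝ fun y => fderiv ℝ f y (e a) :=
    differentiable_fderiv_apply hf (e a)
  -- With `∂` the derivative along `e a`, the flux `T ∂g + r g` is the weight `e^{-R}` times `T ∂f`.
  have flux (a : ι) : (fun y => fderiv ℝ g y (e a))
      = fun y => Real.exp (-R y) * fderiv ℝ f y (e a) - T⁻¹ * (r a y * g y) := by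
    funext y
    rw [fderiv_exp_neg_mul_apply (hR y) (hfd y), hRe]
    ring
  have hflux (a : ι) : T * fderiv ℝ (fun y => fderiv ℝ g y (e a)) x (e a)
      + fderiv ℝ (fun y => r a y * g y) x (e a)
      = Real.exp (-R x) * (T * fderiv ℝ (fun y => fderiv ℝ f y (e a)) x (e a)
        - r a x * fderiv ℝ f x (e a)) := by
    have hrg : Differentiable ℝ fun y => r a y * g y := by fun_prop
    rw [flux, fderiv_fun_sub (by fun_prop) (by fun_prop), sub_apply,
      fderiv_const_mul (hrg x), smul_apply, smul_eq_mul,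
      fderiv_exp_neg_mul_apply (hR x) (hD a x), hRe]
    field_simp
    ring
  simp only [ornsteinUhlenbeckAdjoint, ornsteinUhlenbeck, Finset.mul_sum,
    ← Finset.sum_add_distrib, ← Finset.sum_sub_distrib, hflux]

lemma ornsteinUhlenbeck_exp_neg (hF : ContDiff ℝ 2 F) (x : E) :
    ornsteinUhlenbeck T e r (fun y => Real.exp (-F y)) x
      = Real.exp (-F x) * (T * ∑ a, fderiv ℝ F x (e a) ^ 2 - ornsteinUhlenbeck T e r F x) := by
  have hFd : Differentiable ℝ F := hF.differentiable two_ne_zero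
  have hD (a : ι) : Differentiable ℝ fun y => fderiv ℝ F y (e a) :=
    differentiable_fderiv_apply hF (e a)
  have second (a : ι) : fderiv ℝ (fun y => fderiv ℝ (fun z => Real.exp (-F z)) y (e a)) x (e a)
      = Real.exp (-F x) *
        (fderiv ℝ F x (e a) ^ 2 - fderiv ℝ (fun y => fderiv ℝ F y (e a)) x (e a)) := by
    simp only [fderiv_exp_neg_apply (hFd _)]
    rw [fderiv_exp_neg_mul_apply (hFd x) (hD a x).fun_neg, fderiv_fun_neg, neg_apply]
    ring
  simp only [ornsteinUhlenbeck, second, fderiv_exp_neg_apply (hFd x), Finset.mul_sum,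
    ← Finset.sum_sub_distrib]
  exact Finset.sum_congr rfl fun a _ => by ring

end OrnsteinUhlenbeck

section Generator

lemma sum_mul_apply_single_single (L : Cfg m d →L[ℝ] ℝ) (v : Cfg m d) :
    ∑ i, ∑ a, v i a * L (Pi.single i (Pi.single a 1)) = L v := by
  rw [← L.sum_comp_single]
  exact Finset.sum_congr rfl fun i _ =>
    sum_mul_apply_single (L.comp (.single ℝ (fun _ => Vc d) i)) (v i)

lemma apply_eq_sum_coordinates (L : Phs m d →L[ℝ] ℝ) (v : Phs m d) :
    L v = ∑ i, ∑ a, v.1 i a * L (eP i a) + ∑ i, ∑ a, v.2.1 i a * L (eQ i a)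
      + ∑ a, v.2.2.1 a * L (eR1 a) + ∑ a, v.2.2.2 a * L (eRn a) := by
  rw [← L.comp_inl_add_comp_inr, ← (L.comp (.inr ℝ _ _)).comp_inl_add_comp_inr,
    ← ((L.comp (.inr ℝ _ _)).comp (.inr ℝ _ _)).comp_inl_add_comp_inr,
    ← sum_mul_apply_single_single, ← sum_mul_apply_single_single, ← sum_mul_apply_single,
    ← sum_mul_apply_single, ← add_assoc, ← add_assoc]
  rfl

/-- The coordinate functions of the first reservoir variable `r₁`. -/
def r1Coord (m : ℕ) (a : Fin d) : Phs m d →L[ℝ] ℝ :=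
  .comp (.proj a) (.comp (.fst ℝ _ _) (.comp (.snd ℝ _ _) (.snd ℝ _ _)))

/-- The coordinate functions of the last reservoir variable `rₙ`. -/
def rnCoord (m : ℕ) (a : Fin d) : Phs m d →L[ℝ] ℝ :=
  .comp (.proj a) (.comp (.snd ℝ _ _) (.comp (.snd ℝ _ _) (.snd ℝ _ _)))

/-- The vector field of the Hamiltonian dynamics of the chain together with its coupling to the
reservoir variables: the part of the dynamics without noise and friction. -/
def hamiltonianField (lam : ℝ) (U1 U2 : Vc d → ℝ) (x : Phs (n + 2) d) : Phs (n + 2) d :=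
  (fun i a => -fderiv ℝ (Vtot U1 U2) x.2.1 (Pi.single i (Pi.single a 1))
      - (if i = 0 then lam * x.2.2.1 a else 0)
      - (if i = Fin.last (n + 1) then lam * x.2.2.2 a else 0),
    x.1, lam • x.1 0, lam • x.1 (Fin.last (n + 1)))

variable {γ lam T1 Tn : ℝ} {U1 U2 : Vc d → ℝ}

lemma apply_hamiltonianField (L : Phs (n + 2) d →L[ℝ] ℝ) (x : Phs (n + 2) d) :
    L (hamiltonianField lam U1 U2 x) =
      lam * (∑ a, x.1 0 a * L (eR1 a) - ∑ a, x.2.2.1 a * L (eP 0 a))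
      + lam * (∑ a, x.1 (Fin.last (n + 1)) a * L (eRn a)
        - ∑ a, x.2.2.2 a * L (eP (Fin.last (n + 1)) a))
      + ∑ i, (∑ a, x.1 i a * L (eQ i a)
        - ∑ a, fderiv ℝ (Vtot U1 U2) x.2.1 (Pi.single i (Pi.single a 1)) * L (eP i a)) := by
  have sum_ite (k : Fin (n + 2)) (g : Fin (n + 2) → Fin d → ℝ) :
      ∑ i, ∑ a, (if i = k then g i a else 0) = ∑ a, g k a := by
    rw [Finset.sum_comm]
    simp only [Finset.sum_ite_eq', Finset.mem_univ, if_true]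
  rw [apply_eq_sum_coordinates L]
  simp only [hamiltonianField, sub_mul, neg_mul, ite_mul, zero_mul, Pi.smul_apply, smul_eq_mul,
    Finset.sum_sub_distrib, Finset.sum_neg_distrib, sum_ite, mul_assoc, ← Finset.mul_sum]
  ring

lemma gen_eq_ornsteinUhlenbeck_add (f : Phs (n + 2) d → ℝ) (x : Phs (n + 2) d) :
    gen γ lam T1 Tn U1 U2 f x = γ * ornsteinUhlenbeck T1 eR1 (r1Coord _) f x
      + γ * ornsteinUhlenbeck Tn eRn (rnCoord _) f x
      + fderiv ℝ f x (hamiltonianField lam U1 U2 x) := by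
  rw [apply_hamiltonianField]
  simp only [gen, PD, ornsteinUhlenbeck, r1Coord, rnCoord, ContinuousLinearMap.comp_apply,
    ContinuousLinearMap.coe_snd', ContinuousLinearMap.coe_fst', ContinuousLinearMap.proj_apply]
  ring

lemma genT_eq_ornsteinUhlenbeckAdjoint_sub (g : Phs (n + 2) d → ℝ) (x : Phs (n + 2) d) :
    genT γ lam T1 Tn U1 U2 g x = γ * ornsteinUhlenbeckAdjoint T1 eR1 (r1Coord _) g x
      + γ * ornsteinUhlenbeckAdjoint Tn eRn (rnCoord _) g x
      - fderiv ℝ g x (hamiltonianField lam U1 U2 x) := by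
  rw [apply_hamiltonianField]
  simp only [genT, PD, ornsteinUhlenbeckAdjoint, r1Coord, rnCoord, ContinuousLinearMap.comp_apply,
    ContinuousLinearMap.coe_snd', ContinuousLinearMap.coe_fst', ContinuousLinearMap.proj_apply]
  ring

/-- The time reversal `(p, q, r₁, rₙ) ↦ (-p, q, r₁, rₙ)`, so that `Jop f = f ∘ timeReversal m d`
holds by definition. -/
def timeReversal (m d : ℕ) : Phs m d ≃L[ℝ] Phs m d :=
  (ContinuousLinearEquiv.neg ℝ).prodCongr (.refl ℝ _)

lemma timeReversal_timeReversal (x : Phs m d) : timeReversal m d (timeReversal m d x) = x :=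
  Prod.ext (neg_neg x.1) rfl

lemma timeReversal_eR1 (a : Fin d) : timeReversal m d (eR1 a) = eR1 a :=
  Prod.ext neg_zero rfl

lemma timeReversal_eRn (a : Fin d) : timeReversal m d (eRn a) = eRn a :=
  Prod.ext neg_zero rfl

lemma timeReversal_hamiltonianField (x : Phs (n + 2) d) :
    timeReversal _ d (hamiltonianField lam U1 U2 x)
      = -hamiltonianField lam U1 U2 (timeReversal _ d x) := by
  change (-(hamiltonianField lam U1 U2 x).1, x.1, lam • x.1 0, lam • x.1 (Fin.last (n + 1)))
    = (-(hamiltonianField lam U1 U2 x).1, -(-x.1), -(lam • -x.1 0),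
      -(lam • -x.1 (Fin.last (n + 1))))
  simp only [smul_neg, neg_neg]

lemma genT_Jop (g : Phs (n + 2) d → ℝ) (x : Phs (n + 2) d) :
    genT γ lam T1 Tn U1 U2 (Jop g) (timeReversal _ d x)
      = γ * ornsteinUhlenbeckAdjoint T1 eR1 (r1Coord _) g x
      + γ * ornsteinUhlenbeckAdjoint Tn eRn (rnCoord _) g x
      + fderiv ℝ g x (hamiltonianField lam U1 U2 x) := by
  have hJop : Jop g = g ∘ timeReversal (n + 2) d := rfl
  rw [genT_eq_ornsteinUhlenbeckAdjoint_sub, hJop,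
    ornsteinUhlenbeckAdjoint_comp_equiv _ timeReversal_eR1 fun _ _ => rfl,
    ornsteinUhlenbeckAdjoint_comp_equiv _ timeReversal_eRn fun _ _ => rfl,
    (timeReversal _ d).comp_right_fderiv, ContinuousLinearMap.comp_apply,
    ContinuousLinearEquiv.coe_coe, timeReversal_hamiltonianField, timeReversal_timeReversal,
    map_neg, sub_neg_eq_add]

lemma gen_exp_neg {F : Phs (n + 2) d → ℝ} (hF : ContDiff ℝ 2 F) (x : Phs (n + 2) d) :
    gen γ lam T1 Tn U1 U2 (fun y => Real.exp (-F y)) x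
      = Real.exp (-F x) * (γ * (T1 * ∑ a, PD F x (eR1 a) ^ 2 + Tn * ∑ a, PD F x (eRn a) ^ 2)
        - gen γ lam T1 Tn U1 U2 F x) := by
  simp only [gen_eq_ornsteinUhlenbeck_add, ornsteinUhlenbeck_exp_neg hF,
    fderiv_exp_neg_apply (hF.differentiable two_ne_zero x), PD]
  ring

end Generator

section Chain

/-- `cfgNat` as a continuous linear map of the configuration. -/
def cfgNatL (n d k : ℕ) : Cfg (n + 2) d →L[ℝ] Vc d :=
  if h : k < n + 2 then .proj ⟨k, h⟩ else 0

lemma cfgNat_eq_cfgNatL (q : Cfg (n + 2) d) (k : ℕ) : cfgNat q k = cfgNatL n d k q := by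
  unfold cfgNat cfgNatL
  split_ifs <;> rfl

lemma cfgNat_val (q : Cfg (n + 2) d) (i : Fin (n + 2)) : cfgNat q i = q i :=
  dif_pos i.isLt

lemma cfgNat_zero (k : ℕ) : cfgNat (0 : Cfg (n + 2) d) k = 0 := by
  rw [cfgNat_eq_cfgNatL, map_zero]

variable {lam T1 Tn : ℝ} {U1 U2 : Vc d → ℝ}

lemma differentiable_Hloc (hU1 : Differentiable ℝ U1) (hU2 : Differentiable ℝ U2) (k : ℕ) :
    Differentiable ℝ (Hloc (n := n) U1 U2 k) := by
  unfold Hloc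
  simp only [cfgNat_eq_cfgNatL]
  split_ifs <;> fun_prop

lemma contDiff_Hloc {N : WithTop ℕ∞} (hU1 : ContDiff ℝ N U1) (hU2 : ContDiff ℝ N U2) (k : ℕ) :
    ContDiff ℝ N (Hloc (n := n) U1 U2 k) := by
  unfold Hloc
  simp only [cfgNat_eq_cfgNatL]
  split_ifs <;> fun_prop

lemma differentiable_Rj (hU1 : Differentiable ℝ U1) (hU2 : Differentiable ℝ U2) (j : ℕ) :
    Differentiable ℝ (Rj (n := n) T1 Tn U1 U2 j) := by
  have := differentiable_Hloc (n := n) hU1 hU2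
  unfold Rj
  fun_prop

lemma contDiff_Rj {N : WithTop ℕ∞} (hU1 : ContDiff ℝ N U1) (hU2 : ContDiff ℝ N U2) (j : ℕ) :
    ContDiff ℝ N (Rj (n := n) T1 Tn U1 U2 j) := by
  have := contDiff_Hloc (n := n) hU1 hU2
  unfold Rj
  fun_prop

lemma fderiv_Hloc_apply (hU1 : Differentiable ℝ U1) (hU2 : Differentiable ℝ U2) (k : ℕ)
    (x v : Phs (n + 2) d) :
    fderiv ℝ (Hloc U1 U2 k) x v = ∑ a, cfgNat x.1 k a * cfgNat v.1 k a
      + fderiv ℝ U1 (cfgNat x.2.1 k) (cfgNat v.2.1 k)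
      + (if k = 0 then 0 else (1 / 2) * fderiv ℝ U2 (cfgNat x.2.1 (k - 1) - cfgNat x.2.1 k)
          (cfgNat v.2.1 (k - 1) - cfgNat v.2.1 k))
      + (if k = n + 1 then 0 else (1 / 2) * fderiv ℝ U2 (cfgNat x.2.1 k - cfgNat x.2.1 (k + 1))
          (cfgNat v.2.1 k - cfgNat v.2.1 (k + 1))) := by
  refine (hasDerivAt_add_smul (differentiable_Hloc hU1 hU2 k x) v).unique ?_
  have bond (P : Prop) [Decidable P] (u w : Vc d) :
      HasDerivAt (fun t : ℝ => if P then 0 else (1 / 2) * U2 (u + t • w))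
        (if P then 0 else (1 / 2) * fderiv ℝ U2 u w) 0 := by
    split_ifs
    · exact hasDerivAt_const _ _
    · exact (hasDerivAt_add_smul (hU2 u) w).const_mul _
  simp only [Hloc, cfgNat_eq_cfgNatL, Prod.fst_add, Prod.snd_add, Prod.smul_fst, Prod.smul_snd,
    map_add, map_smul, add_sub_add_comm, ← smul_sub]
  exact (((hasDerivAt_half_sum_sq_add_smul _ _).fun_add
    (hasDerivAt_add_smul (hU1 _) _)).fun_add (bond _ _ _)).fun_add (bond _ _ _)

lemma fderiv_Vtot_apply (hU1 : Differentiable ℝ U1) (hU2 : Differentiable ℝ U2)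
    (q v : Cfg (n + 2) d) :
    fderiv ℝ (Vtot U1 U2) q v = ∑ i, fderiv ℝ U1 (q i) (v i)
      + ∑ i : Fin (n + 1), fderiv ℝ U2 (q i.castSucc - q i.succ) (v i.castSucc - v i.succ) := by
  have hV : Differentiable ℝ (Vtot (n := n) U1 U2) := by
    unfold Vtot
    fun_prop
  refine (hasDerivAt_add_smul (hV q) v).unique ?_
  simp only [Vtot, Pi.add_apply, Pi.smul_apply, add_sub_add_comm, ← smul_sub]
  exact (HasDerivAt.fun_sum fun i _ => hasDerivAt_add_smul (hU1 _) _).fun_add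
    (HasDerivAt.fun_sum fun i _ => hasDerivAt_add_smul (hU2 _) _)

lemma fderiv_Vtot_single (hU1 : Differentiable ℝ U1) (hU2 : Differentiable ℝ U2)
    (q : Cfg (n + 2) d) (k : Fin (n + 2)) (u : Vc d) :
    fderiv ℝ (Vtot U1 U2) q (Pi.single k u) = fderiv ℝ U1 (cfgNat q k) u
      + (if (k : ℕ) = n + 1 then 0 else fderiv ℝ U2 (cfgNat q k - cfgNat q (k + 1)) u)
      - (if (k : ℕ) = 0 then 0 else fderiv ℝ U2 (cfgNat q (k - 1) - cfgNat q k) u) := by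
  let bond (i : ℕ) : Vc d →L[ℝ] ℝ := fderiv ℝ U2 (cfgNat q i - cfgNat q (i + 1))
  have hbond (i : Fin (n + 1)) : fderiv ℝ U2 (q i.castSucc - q i.succ) = bond i := by
    rw [← cfgNat_val q, ← cfgNat_val q, Fin.val_castSucc, Fin.val_succ]
  have hpinning : ∑ i, fderiv ℝ U1 (q i) ((Pi.single k u : Cfg (n + 2) d) i)
      = fderiv ℝ U1 (cfgNat q k) u := by
    rw [Fintype.sum_eq_single k fun i hi => by rw [Pi.single_eq_of_ne hi, map_zero],
      Pi.single_eq_same, cfgNat_val]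
  have hpred : (if (k : ℕ) = 0 then 0 else bond (k - 1) u)
      = if (k : ℕ) = 0 then 0 else fderiv ℝ U2 (cfgNat q (k - 1) - cfgNat q k) u := by
    split_ifs with hk
    · rfl
    · simp only [bond, Nat.sub_add_cancel (Nat.pos_of_ne_zero hk)]
  rw [fderiv_Vtot_apply hU1 hU2, hpinning, ← hpred]
  simp only [hbond, map_sub, Finset.sum_sub_distrib]
  rw [sum_single_castSucc (A := fun i => bond i) fun i => map_zero (bond i),
    sum_single_succ (A := fun i => bond i) fun i => map_zero (bond i), add_sub_assoc]

lemma heatFlow_of_lt {k : ℕ} (hk : k < n + 2) (x : Phs (n + 2) d) :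
    heatFlow lam U2 k x = if k = 0 then -lam * ∑ a, x.2.2.1 a * x.1 0 a
      else (1 / 2) * fderiv ℝ U2 (cfgNat x.2.1 (k - 1) - cfgNat x.2.1 k)
        (cfgNat x.1 (k - 1) + cfgNat x.1 k) := by
  unfold heatFlow
  rw [if_neg hk.ne, ← sum_mul_apply_single, Finset.mul_sum _ _ (1 / 2)]
  simp only [Pi.add_apply, ← mul_assoc, one_div_mul_eq_div]

lemma heatFlow_succ (k : ℕ) (x : Phs (n + 2) d) :
    heatFlow lam U2 (k + 1) x
      = if k = n + 1 then lam * ∑ a, x.2.2.2 a * x.1 (Fin.last (n + 1)) a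
      else (1 / 2) * fderiv ℝ U2 (cfgNat x.2.1 k - cfgNat x.2.1 (k + 1))
        (cfgNat x.1 k + cfgNat x.1 (k + 1)) := by
  unfold heatFlow
  rw [if_neg k.succ_ne_zero, ← sum_mul_apply_single, Finset.mul_sum _ _ (1 / 2)]
  simp only [Nat.add_right_cancel_iff, Nat.add_sub_cancel, Pi.add_apply, ← mul_assoc,
    one_div_mul_eq_div]

lemma sum_mul_hamiltonianField_fst (x : Phs (n + 2) d) (k : Fin (n + 2)) :
    ∑ a, x.1 k a * (hamiltonianField lam U1 U2 x).1 k a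
      = -fderiv ℝ (Vtot U1 U2) x.2.1 (Pi.single k (x.1 k))
        - (if (k : ℕ) = 0 then lam * ∑ a, x.2.2.1 a * x.1 0 a else 0)
        - (if (k : ℕ) = n + 1 then lam * ∑ a, x.2.2.2 a * x.1 (Fin.last (n + 1)) a else 0) := by
  have hforce : ∑ a, x.1 k a * fderiv ℝ (Vtot U1 U2) x.2.1 (Pi.single k (Pi.single a 1))
      = fderiv ℝ (Vtot U1 U2) x.2.1 (Pi.single k (x.1 k)) :=
    sum_mul_apply_single ((fderiv ℝ (Vtot U1 U2) x.2.1).comp (.single ℝ (fun _ => Vc d) k)) (x.1 k)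
  have hbath (i : Fin (n + 2)) (r : Vc d) :
      ∑ a, x.1 k a * (if k = i then lam * r a else 0)
        = if (k : ℕ) = i then lam * ∑ a, r a * x.1 i a else 0 := by
    simp only [← Fin.ext_iff]
    split_ifs with h
    · subst h
      rw [Finset.mul_sum]
      exact Finset.sum_congr rfl fun a _ => by ring
    · simp only [mul_zero, Finset.sum_const_zero]
  simp only [hamiltonianField, mul_sub, mul_neg, Finset.sum_sub_distrib, Finset.sum_neg_distrib,
    hforce, hbath]
  rfl

lemma fderiv_Hloc_hamiltonianField (hU1 : Differentiable ℝ U1) (hU2 : Differentiable ℝ U2)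
    (k : Fin (n + 2)) (x : Phs (n + 2) d) :
    fderiv ℝ (Hloc U1 U2 k) x (hamiltonianField lam U1 U2 x)
      = heatFlow lam U2 k x - heatFlow lam U2 (k + 1) x := by
  have hq : (hamiltonianField lam U1 U2 x).2.1 = x.1 := rfl
  rw [fderiv_Hloc_apply hU1 hU2, cfgNat_val, cfgNat_val, sum_mul_hamiltonianField_fst,
    fderiv_Vtot_single hU1 hU2, heatFlow_of_lt k.isLt, heatFlow_succ, hq]
  simp only [map_sub, map_add, cfgNat_val]
  split_ifs <;> ring

lemma fderiv_Rj_apply (hU1 : Differentiable ℝ U1) (hU2 : Differentiable ℝ U2) (j : ℕ)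
    (x v : Phs (n + 2) d) :
    fderiv ℝ (Rj T1 Tn U1 U2 j) x v =
      (1 / T1) * (∑ a, x.2.2.1 a * v.2.2.1 a + ∑ k ∈ Finset.range j, fderiv ℝ (Hloc U1 U2 k) x v)
      + (1 / Tn) * (∑ k ∈ Finset.Ico j (n + 2), fderiv ℝ (Hloc U1 U2 k) x v
        + ∑ a, x.2.2.2 a * v.2.2.2 a) := by
  refine (hasDerivAt_add_smul (differentiable_Rj hU1 hU2 j x) v).unique ?_
  have energy (k : ℕ) := hasDerivAt_add_smul (differentiable_Hloc (n := n) hU1 hU2 k x) v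
  exact (((hasDerivAt_half_sum_sq_add_smul _ _).fun_add
      (HasDerivAt.fun_sum fun k _ => energy k)).const_mul _).fun_add
    (((HasDerivAt.fun_sum fun k _ => energy k).fun_add
      (hasDerivAt_half_sum_sq_add_smul _ _)).const_mul _)

lemma fderiv_Rj_eR1 (hU1 : Differentiable ℝ U1) (hU2 : Differentiable ℝ U2) (j : ℕ)
    (x : Phs (n + 2) d) (a : Fin d) :
    fderiv ℝ (Rj T1 Tn U1 U2 j) x (eR1 a) = r1Coord _ a x / T1 := by
  rw [fderiv_Rj_apply hU1 hU2]
  simp [div_eq_inv_mul, fderiv_Hloc_apply hU1 hU2, eR1, r1Coord, cfgNat_zero, Pi.single_apply]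

lemma fderiv_Rj_eRn (hU1 : Differentiable ℝ U1) (hU2 : Differentiable ℝ U2) (j : ℕ)
    (x : Phs (n + 2) d) (a : Fin d) :
    fderiv ℝ (Rj T1 Tn U1 U2 j) x (eRn a) = rnCoord _ a x / Tn := by
  rw [fderiv_Rj_apply hU1 hU2]
  simp [div_eq_inv_mul, fderiv_Hloc_apply hU1 hU2, eRn, rnCoord, cfgNat_zero, Pi.single_apply]

lemma fderiv_Rj_hamiltonianField (hU1 : Differentiable ℝ U1) (hU2 : Differentiable ℝ U2) {j : ℕ}
    (hj : j ≤ n + 2) (x : Phs (n + 2) d) :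
    fderiv ℝ (Rj T1 Tn U1 U2 j) x (hamiltonianField lam U1 U2 x) = sigmaEP lam T1 Tn U2 j x := by
  have energy_range : ∑ k ∈ Finset.range j,
      fderiv ℝ (Hloc U1 U2 k) x (hamiltonianField lam U1 U2 x)
      = heatFlow lam U2 0 x - heatFlow lam U2 j x := by
    rw [← Finset.sum_range_sub' fun k => heatFlow lam U2 k x]
    exact Finset.sum_congr rfl fun k hk =>
      fderiv_Hloc_hamiltonianField hU1 hU2 ⟨k, (Finset.mem_range.1 hk).trans_le hj⟩ x
  have energy_Ico : ∑ k ∈ Finset.Ico j (n + 2),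
      fderiv ℝ (Hloc U1 U2 k) x (hamiltonianField lam U1 U2 x)
      = heatFlow lam U2 j x - heatFlow lam U2 (n + 2) x := by
    rw [← neg_sub, ← Finset.sum_Ico_sub (fun k => heatFlow lam U2 k x) hj,
      ← Finset.sum_neg_distrib]
    refine Finset.sum_congr rfl fun k hk => ?_
    rw [neg_sub]
    exact fderiv_Hloc_hamiltonianField hU1 hU2 ⟨k, (Finset.mem_Ico.1 hk).2⟩ x
  have reservoir_first : ∑ a, x.2.2.1 a * (hamiltonianField lam U1 U2 x).2.2.1 a
      = -heatFlow lam U2 0 x := by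
    simp only [hamiltonianField, heatFlow, if_true, Pi.smul_apply, smul_eq_mul, mul_left_comm,
      ← Finset.mul_sum, neg_mul, neg_neg]
  have reservoir_last : ∑ a, x.2.2.2 a * (hamiltonianField lam U1 U2 x).2.2.2 a
      = heatFlow lam U2 (n + 2) x := by
    rw [heatFlow, if_neg (by lia), if_pos rfl]
    simp only [hamiltonianField, Pi.smul_apply, smul_eq_mul, mul_left_comm, ← Finset.mul_sum]
  rw [fderiv_Rj_apply hU1 hU2, energy_range, energy_Ico, reservoir_first, reservoir_last, sigmaEP]
  ring

end Chain

section EntropyProduction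

variable {γ lam T1 Tn : ℝ} {U1 U2 : Vc d → ℝ} {j : ℕ}

lemma genT_Jop_exp_neg_Rj_mul (hT1 : T1 ≠ 0) (hTn : Tn ≠ 0) (hU1 : Differentiable ℝ U1)
    (hU2 : Differentiable ℝ U2) (hj : j ≤ n + 2) {f : Phs (n + 2) d → ℝ} (hf : ContDiff ℝ 2 f)
    (x : Phs (n + 2) d) :
    genT γ lam T1 Tn U1 U2 (Jop fun y => Real.exp (-Rj T1 Tn U1 U2 j y) * f y)
        (timeReversal _ d x)
      = Real.exp (-Rj T1 Tn U1 U2 j x)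
        * (gen γ lam T1 Tn U1 U2 f x - sigmaEP lam T1 Tn U2 j x * f x) := by
  have hR := differentiable_Rj (n := n) (T1 := T1) (Tn := Tn) hU1 hU2 j
  rw [genT_Jop, gen_eq_ornsteinUhlenbeck_add,
    ornsteinUhlenbeckAdjoint_exp_neg_mul hT1 hR (fderiv_Rj_eR1 hU1 hU2 j) hf,
    ornsteinUhlenbeckAdjoint_exp_neg_mul hTn hR (fderiv_Rj_eRn hU1 hU2 j) hf,
    fderiv_exp_neg_mul_apply (hR x) (hf.differentiable two_ne_zero x),
    fderiv_Rj_hamiltonianField hU1 hU2 hj]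
  ring

lemma sigmaEP_eq_sub_gen (hT1 : T1 ≠ 0) (hTn : Tn ≠ 0) (hU1 : ContDiff ℝ 2 U1)
    (hU2 : ContDiff ℝ 2 U2) (hj : j ≤ n + 2) {ρ F : Phs (n + 2) d → ℝ} (hρ : ContDiff ℝ 2 ρ)
    (hρpos : ∀ x, 0 < ρ x) (hstat : ∀ x, genT γ lam T1 Tn U1 U2 ρ x = 0)
    (hF : ∀ x, F x = -Rj T1 Tn U1 U2 j x - Real.log (Jop ρ x)) (x : Phs (n + 2) d) :
    sigmaEP lam T1 Tn U2 j x
      = γ * (T1 * ∑ a, PD F x (eR1 a) ^ 2 + Tn * ∑ a, PD F x (eRn a) ^ 2)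
        - gen γ lam T1 Tn U1 U2 F x := by
  have hF2 : ContDiff ℝ 2 F := by
    rw [funext hF]
    exact (contDiff_Rj hU1 hU2 j).neg.sub
      ((hρ.comp (timeReversal _ d).contDiff).log fun _ => (hρpos _).ne')
  have hJρ (y : Phs (n + 2) d) : Real.exp (-Rj T1 Tn U1 U2 j y) * Real.exp (-F y) = Jop ρ y := by
    rw [← Real.exp_add, hF, ← sub_eq_add_neg, sub_sub_cancel]
    exact Real.exp_log (hρpos _)
  have hρ_eq : ρ = Jop fun y => Real.exp (-Rj T1 Tn U1 U2 j y) * Real.exp (-F y) := by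
    funext y
    rw [funext hJρ]
    exact congrArg ρ (timeReversal_timeReversal y).symm
  have hzero := hstat (timeReversal _ d x)
  rw [hρ_eq, genT_Jop_exp_neg_Rj_mul hT1 hTn (hU1.differentiable two_ne_zero)
    (hU2.differentiable two_ne_zero) hj hF2.neg.exp, gen_exp_neg hF2, mul_comm (sigmaEP ..),
    ← mul_sub, mul_eq_zero_iff_left (Real.exp_ne_zero _),
    mul_eq_zero_iff_left (Real.exp_ne_zero _)] at hzero
  linarith

end EntropyProduction

theorem stmt7_general (n d : ℕ) (γ lam T1 Tn : ℝ) (hγ : 0 ≤ γ) (hT1 : 0 < T1) (hTn : 0 < Tn)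
    (U1 U2 : Vc d → ℝ) (hU1 : ContDiff ℝ 2 U1) (hU2 : ContDiff ℝ 2 U2) (j : ℕ) (hj : j ≤ n + 2)
    (ρ : Phs (n + 2) d → ℝ) (hρ : ContDiff ℝ 2 ρ) (hρpos : ∀ x, 0 < ρ x)
    (hstat : ∀ x, genT γ lam T1 Tn U1 U2 ρ x = 0) (μ : Measure (Phs (n + 2) d))
    (F : Phs (n + 2) d → ℝ) (hF : ∀ x, F x = -Rj T1 Tn U1 U2 j x - Real.log (Jop ρ x))
    (hLF : Integrable (gen γ lam T1 Tn U1 U2 F) μ)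
    (hF1 : Integrable (fun x => ∑ a, PD F x (eR1 a) ^ 2) μ)
    (hFn : Integrable (fun x => ∑ a, PD F x (eRn a) ^ 2) μ)
    (hLF0 : ∫ x, gen γ lam T1 Tn U1 U2 F x ∂μ = 0) :
    (∫ x, sigmaEP lam T1 Tn U2 j x ∂μ
        = γ * (T1 * ∫ x, (∑ a, PD F x (eR1 a) ^ 2) ∂μ + Tn * ∫ x, (∑ a, PD F x (eRn a) ^ 2) ∂μ))
      ∧ 0 ≤ ∫ x, sigmaEP lam T1 Tn U2 j x ∂μ := by
  have mean_eq : ∫ x, sigmaEP lam T1 Tn U2 j x ∂μ = γ * (T1 * ∫ x, (∑ a, PD F x (eR1 a) ^ 2) ∂μ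
      + Tn * ∫ x, (∑ a, PD F x (eRn a) ^ 2) ∂μ) := by
    simp only [sigmaEP_eq_sub_gen hT1.ne' hTn.ne' hU1 hU2 hj hρ hρpos hstat hF]
    rw [integral_sub (((hF1.const_mul T1).fun_add (hFn.const_mul Tn)).const_mul γ) hLF, hLF0,
      sub_zero, integral_const_mul, integral_add (hF1.const_mul T1) (hFn.const_mul Tn),
      integral_const_mul, integral_const_mul]
  refine ⟨mean_eq, mean_eq ▸ ?_⟩
  have gradient_nonneg (e : Fin d → Phs (n + 2) d) : 0 ≤ ∫ x, (∑ a, PD F x (e a) ^ 2) ∂μ :=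
    integral_nonneg fun x => Finset.sum_nonneg fun a _ => sq_nonneg _
  exact mul_nonneg hγ (add_nonneg (mul_nonneg hT1.le (gradient_nonneg eR1))
    (mul_nonneg hTn.le (gradient_nonneg eRn)))

/-- if ρ is a smooth everywhere positive normalized stationary
density (`Lᵀρ = 0`, `∫ρ = 1`), μ = ρ dx, and `F = −R_j − log(Jρ)`, and if `LF`
and `|∇_{rᵢ}F|²` are μ-integrable with `∫ LF dμ = 0`, then the mean entropy
production in the stationary state is nonnegative:
`∫ σ_j dμ = γ Σ_{i∈{1,n}} Tᵢ ∫ |∇_{rᵢ}F|² dμ ≥ 0`. -/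
theorem stmt7 (n d : ℕ) (hd : 1 ≤ d) (γ lam T1 Tn : ℝ)
    (hγ : 0 < γ) (hlam : 0 < lam) (hT1 : 0 < T1) (hTn : 0 < Tn)
    (U1 U2 : Vc d → ℝ) (hU1 : ContDiff ℝ (⊤ : ℕ∞) U1) (hU2 : ContDiff ℝ (⊤ : ℕ∞) U2)
    (j : ℕ) (hj : j ≤ n + 2)
    (ρ : Phs (n+2) d → ℝ) (hρ : ContDiff ℝ (⊤ : ℕ∞) ρ) (hρpos : ∀ x, 0 < ρ x)
    (hstat : ∀ x, genT γ lam T1 Tn U1 U2 ρ x = 0)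
    (hnorm : ∫ x : Phs (n+2) d, ρ x = 1)
    (μ : Measure (Phs (n+2) d))
    (hμ : μ = volume.withDensity (fun x => ENNReal.ofReal (ρ x)))
    (F : Phs (n+2) d → ℝ)
    (hF : ∀ x : Phs (n+2) d,
      F x = - Rj T1 Tn U1 U2 j x - Real.log (ρ (-x.1, x.2.1, x.2.2.1, x.2.2.2)))
    (hLF : Integrable (gen γ lam T1 Tn U1 U2 F) μ)
    (hF1 : Integrable (fun x => ∑ a, (PD F x (eR1 a)) ^ 2) μ)
    (hFn : Integrable (fun x => ∑ a, (PD F x (eRn a)) ^ 2) μ)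
    (hLF0 : ∫ x, gen γ lam T1 Tn U1 U2 F x ∂μ = 0) :
    (∫ x, sigmaEP lam T1 Tn U2 j x ∂μ
        = γ * (T1 * ∫ x, (∑ a, (PD F x (eR1 a)) ^ 2) ∂μ
               + Tn * ∫ x, (∑ a, (PD F x (eRn a)) ^ 2) ∂μ))
      ∧ 0 ≤ ∫ x, sigmaEP lam T1 Tn U2 j x ∂μ :=
  stmt7_general n d γ lam T1 Tn hγ.le hT1 hTn U1 U2 (contDiff_infty.1 hU1 2)
    (contDiff_infty.1 hU2 2) j hj ρ (contDiff_infty.1 hρ 2) hρpos hstat μ F hF hLF hF1 hFn hLF0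

end
end

section
/- Let (X,Σ) be a measurable space, κ a Markov kernel on X, μ a probability measure on X, W : X → ℝ measurable with W ≥ 1 and M := ∫ W^{3/2} dμ < ∞, and δ ≥ 0. Assume that W is κ(x,·)-integrable for every x and that for every measurable h : X → ℝ with |h| ≤ W pointwise one has |∫ h dκ(x,·) − ∫ h dμ| ≤ δ W(x) for every x ∈ X. Then for all measurable f, g : X → ℝ and constants a, b ≥ 0 with f² ≤ a W and g² ≤ b W pointwise, | ∫ ( ∫ f dκ(x,·) ) g(x) dμ(x) − (∫ f dμ)(∫ g dμ) | ≤ √(ab) · δ · M. -/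
open MeasureTheory ProbabilityTheory

/-! Since `|f| ≤ √a √W ≤ √a W`, the weighted total variation bound gives `|κf - μ(f)| ≤ √a δ W`
pointwise, where `κf(x) = ∫ f dκ(x,·)`. The other factor costs only half a power of the weight,
`|g| ≤ √b √W`, so the integral of the product of the two bounds is `√a √b δ ∫ W^{3/2} dμ`. -/

section

variable {X Y : Type*} [MeasurableSpace X] [MeasurableSpace Y]

/-- The bound `|ρ - ν|_V ≤ D` in the weighted total variation norm
`|π|_V = sup_{|h| ≤ V} |∫ h dπ|`. It is stated test function by test function because a real
supremum over an unbounded family is `0`; integrability of `V` makes every `∫ h dρ` and `∫ h dν`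
a genuine integral. -/
structure WeightedTVLE (V : Y → ℝ) (ρ ν : Measure Y) (D : ℝ) : Prop where
  integrable_left : Integrable V ρ
  integrable_right : Integrable V ν
  abs_integral_sub_le : ∀ h : Y → ℝ, Measurable h → (∀ y, |h y| ≤ V y) →
    |(∫ y, h y ∂ρ) - ∫ y, h y ∂ν| ≤ D

theorem WeightedTVLE.abs_integral_sub_le_mul {V f : Y → ℝ} {ρ ν : Measure Y} {c D : ℝ}
    (hTV : WeightedTVLE V ρ ν D) (hf : Measurable f) (hc : 0 ≤ c) (hfV : ∀ y, |f y| ≤ c * V y) :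
    |(∫ y, f y ∂ρ) - ∫ y, f y ∂ν| ≤ c * D := by
  rcases hc.eq_or_lt with rfl | hc
  · have hf0 : ∀ y, f y = 0 := fun y ↦ abs_nonpos_iff.mp (by simpa only [zero_mul] using hfV y)
    simp [hf0]
  · have hscaled : ∀ y, |c⁻¹ * f y| ≤ V y := fun y ↦ by
      rw [abs_mul, abs_of_pos (inv_pos.mpr hc), inv_mul_le_iff₀ hc]
      exact hfV y
    have hbound := hTV.abs_integral_sub_le _ (hf.const_mul c⁻¹) hscaled
    rwa [integral_const_mul, integral_const_mul, ← mul_sub, abs_mul,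
      abs_of_pos (inv_pos.mpr hc), inv_mul_le_iff₀ hc] at hbound

theorem abs_integral_mul_sub_mul_integral_le {μ : Measure X} {F g D G : X → ℝ} {c : ℝ}
    (hF : AEStronglyMeasurable F μ) (hg : Integrable g μ)
    (hDG : Integrable (fun x ↦ D x * G x) μ)
    (hFD : ∀ᵐ x ∂μ, |F x - c| ≤ D x) (hgG : ∀ᵐ x ∂μ, |g x| ≤ G x) :
    |(∫ x, F x * g x ∂μ) - c * ∫ x, g x ∂μ| ≤ ∫ x, D x * G x ∂μ := by
  have hbound : ∀ᵐ x ∂μ, ‖(F x - c) * g x‖ ≤ D x * G x := by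
    filter_upwards [hFD, hgG] with x hFx hgx
    rw [norm_mul]
    exact mul_le_mul hFx hgx (abs_nonneg _) ((abs_nonneg _).trans hFx)
  have hint : Integrable (fun x ↦ (F x - c) * g x) μ :=
    hDG.mono' ((hF.sub aestronglyMeasurable_const).mul hg.aestronglyMeasurable) hbound
  have hcenter : (∫ x, F x * g x ∂μ) - c * ∫ x, g x ∂μ = ∫ x, (F x - c) * g x ∂μ := by
    rw [sub_eq_iff_eq_add, ← integral_const_mul, ← integral_add hint (hg.const_mul c)]
    simp only [sub_mul, sub_add_cancel]
  rw [hcenter]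
  exact norm_integral_le_of_norm_le hDG hbound

theorem abs_le_sqrt_mul_sqrt_of_sq_le_mul {a w x : ℝ} (hw : 0 ≤ w) (h : x ^ 2 ≤ a * w) :
    |x| ≤ √a * √w :=
  (Real.abs_le_sqrt h).trans_eq (Real.sqrt_mul' a hw)

theorem abs_le_sqrt_mul_of_sq_le_mul {a w x : ℝ} (hw : 1 ≤ w) (h : x ^ 2 ≤ a * w) :
    |x| ≤ √a * w :=
  (abs_le_sqrt_mul_sqrt_of_sq_le_mul (zero_le_one.trans hw) h).trans <|
    mul_le_mul_of_nonneg_left (Real.sqrt_le_self_iff.mpr (.inr hw)) (Real.sqrt_nonneg a)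

theorem rpow_three_halves_eq_mul_sqrt {w : ℝ} (hw : 0 ≤ w) : w ^ (3 / 2 : ℝ) = w * √w := by
  rw [Real.sqrt_eq_rpow, ← Real.rpow_one_add' hw (by norm_num)]
  norm_num

theorem integrable_of_integrable_rpow_of_one_le {μ : Measure X} {W : X → ℝ} {p : ℝ} (hp : 1 ≤ p)
    (hW1 : ∀ᵐ x ∂μ, 1 ≤ W x) (hWp : Integrable (fun x ↦ W x ^ p) μ) : Integrable W μ := by
  have hW : AEMeasurable W μ := (hWp.aemeasurable.pow_const p⁻¹).congr <| by
    filter_upwards [hW1] with x hx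
    exact Real.rpow_rpow_inv (zero_le_one.trans hx) (zero_lt_one.trans_le hp).ne'
  refine hWp.mono' hW.aestronglyMeasurable ?_
  filter_upwards [hW1] with x hx
  rw [Real.norm_of_nonneg (zero_le_one.trans hx)]
  exact Real.self_le_rpow_of_one_le hx hp

theorem stmt14_general {κ : Kernel X Y} [IsSFiniteKernel κ] {μ : Measure X} {ν : Measure Y}
    {V f : Y → ℝ} {W g : X → ℝ} {a b δ : ℝ} (hV1 : ∀ y, 1 ≤ V y) (hW1 : ∀ x, 1 ≤ W x)
    (hWM : Integrable (fun x ↦ W x ^ (3 / 2 : ℝ)) μ)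
    (hTV : ∀ x, WeightedTVLE V (κ x) ν (δ * W x))
    (hf : Measurable f) (hg : AEStronglyMeasurable g μ)
    (hfa : ∀ y, f y ^ 2 ≤ a * V y) (hgb : ∀ x, g x ^ 2 ≤ b * W x) :
    |(∫ x, (∫ y, f y ∂(κ x)) * g x ∂μ) - (∫ y, f y ∂ν) * ∫ x, g x ∂μ|
      ≤ √a * √b * δ * ∫ x, W x ^ (3 / 2 : ℝ) ∂μ := by
  have hW0 : ∀ x, 0 ≤ W x := fun x ↦ zero_le_one.trans (hW1 x)
  have hκf : ∀ x, |(∫ y, f y ∂(κ x)) - ∫ y, f y ∂ν| ≤ √a * (δ * W x) := fun x ↦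
    (hTV x).abs_integral_sub_le_mul hf (Real.sqrt_nonneg a)
      fun y ↦ abs_le_sqrt_mul_of_sq_le_mul (hV1 y) (hfa y)
  have hgW : ∀ x, |g x| ≤ √b * √(W x) := fun x ↦
    abs_le_sqrt_mul_sqrt_of_sq_le_mul (hW0 x) (hgb x)
  have hWμ : Integrable W μ :=
    integrable_of_integrable_rpow_of_one_le (by norm_num) (.of_forall hW1) hWM
  have hgμ : Integrable g μ := (hWμ.const_mul √b).mono' hg <|
    .of_forall fun x ↦ abs_le_sqrt_mul_of_sq_le_mul (hW1 x) (hgb x)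
  have hprod : ∀ x, √a * (δ * W x) * (√b * √(W x)) = √a * √b * δ * W x ^ (3 / 2 : ℝ) :=
    fun x ↦ by rw [rpow_three_halves_eq_mul_sqrt (hW0 x)]; ring
  have hcov := abs_integral_mul_sub_mul_integral_le
    hf.stronglyMeasurable.integral_kernel.aestronglyMeasurable hgμ
    (by simpa only [hprod] using hWM.const_mul (√a * √b * δ)) (.of_forall hκf) (.of_forall hgW)
  simpa only [hprod, integral_const_mul] using hcov

end

/-- abstract exponential decay of correlations: let κ be a Markov
kernel on X, μ a probability measure, W ≥ 1 measurable with `M = ∫ W^{3/2} dμ`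
finite, and δ ≥ 0 such that the weighted total-variation bound
`|∫ h dκ(x,·) − ∫ h dμ| ≤ δ W(x)` holds for all measurable |h| ≤ W. Then for
measurable f, g with `f² ≤ aW`, `g² ≤ bW` (a, b ≥ 0),
`|∫ (∫ f dκ(x,·)) g(x) dμ(x) − (∫f dμ)(∫g dμ)| ≤ √(ab) δ M`. -/
theorem stmt14 {X : Type*} [MeasurableSpace X]
    (κ : Kernel X X) [IsMarkovKernel κ]
    (μ : Measure X) [IsProbabilityMeasure μ]
    (W : X → ℝ) (hWmeas : Measurable W) (hW1 : ∀ x, 1 ≤ W x)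
    (hWM : Integrable (fun x => W x ^ (3/2 : ℝ)) μ)
    (δ : ℝ) (hδ : 0 ≤ δ)
    (hWκ : ∀ x, Integrable W (κ x))
    (hTV : ∀ h : X → ℝ, Measurable h → (∀ x, |h x| ≤ W x) →
      ∀ x, |(∫ y, h y ∂(κ x)) - ∫ y, h y ∂μ| ≤ δ * W x) :
    ∀ (f g : X → ℝ), Measurable f → Measurable g →
      ∀ a b : ℝ, 0 ≤ a → 0 ≤ b →
        (∀ x, f x ^ 2 ≤ a * W x) → (∀ x, g x ^ 2 ≤ b * W x) →
        |(∫ x, (∫ y, f y ∂(κ x)) * g x ∂μ) - (∫ x, f x ∂μ) * ∫ x, g x ∂μ|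
          ≤ Real.sqrt (a * b) * δ * ∫ x, W x ^ (3/2 : ℝ) ∂μ := by
  intro f g hf hg a b ha _ hfa hgb
  have hWμ := integrable_of_integrable_rpow_of_one_le (by norm_num) (.of_forall hW1) hWM
  rw [Real.sqrt_mul ha]
  exact stmt14_general hW1 hW1 hWM (fun x ↦ ⟨hWκ x, hWμ, fun h hh hhW ↦ hTV h hh hhW x⟩)
    hf hg.aestronglyMeasurable hfa hgb
end

section
/- For every n ≥ 1 and every real polynomial f of degree r ≥ n − 1, the set 𝒰ⁿ = { (q₁,…,qₙ) ∈ ℝⁿ : there exists (q'₁,…,q'ₙ) ∈ ℝⁿ with det[ (f(q'_i − q_j))_{1≤i,j≤n} ] ≠ 0 } is dense in ℝⁿ; i.e. every polynomial of degree at least n − 1 is n-nondegenerate. -/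
/-!
Every tuple `q` with distinct entries belongs to the set, and such tuples are dense because every
nonempty open subset of `ℝ` is infinite. Let `q` be such a tuple, `d = deg f`, and suppose
`∑ j, c j • f (X - q j) = 0`. For `k < n`, the coefficient of `X ^ (d - k)` in this relation is
`∑ j, c j * p k (-q j)`, where `p k` is the Hasse derivative of `f` of order `d - k`, a polynomial
of degree exactly `k`. As the `-q j` are distinct, Vandermonde gives `c = 0`. So the translates
`x ↦ f (x - q j)` are linearly independent functions, and such functions always have a nonzero
determinant at suitable points: choose the points one at a time, expanding along the row of the
new point.
-/

open Polynomial

theorem exists_injective_forall_mem_of_infinite {ι α : Type*} [Finite ι] {s : ι → Set α}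
    (hs : ∀ i, (s i).Infinite) : ∃ x : ι → α, Function.Injective x ∧ ∀ i, x i ∈ s i := by
  classical
  have := Fintype.ofFinite ι
  choose t hts ht using fun i => (hs i).exists_subset_card_eq (Fintype.card ι)
  have hall (J : Finset ι) : J.card ≤ (J.biUnion t).card := by
    obtain rfl | ⟨j, hj⟩ := J.eq_empty_or_nonempty
    · simp
    · calc J.card ≤ Fintype.card ι := J.card_le_univ
        _ = (t j).card := (ht j).symm
        _ ≤ (J.biUnion t).card := Finset.card_le_card (Finset.subset_biUnion_of_mem t hj)
  obtain ⟨x, hx, hxt⟩ := (Finset.all_card_le_biUnion_card_iff_exists_injective t).mp hall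
  exact ⟨x, hx, fun i => hts i (hxt i)⟩

theorem dense_setOf_injective {ι X : Type*} [Finite ι] [TopologicalSpace X] [T1Space X]
    [PerfectSpace X] : Dense {q : ι → X | Function.Injective q} := by
  refine dense_iff_inter_open.mpr fun U hU ⟨q, hq⟩ => ?_
  obtain ⟨s, hs, hsU⟩ := (isOpen_pi_iff' (A := fun _ => X)).mp hU q hq
  have hs_inf (i : ι) : (s i).Infinite :=
    infinite_of_mem_nhds (q i) ((hs i).1.mem_nhds (hs i).2)
  obtain ⟨x, hx, hxs⟩ := exists_injective_forall_mem_of_infinite hs_inf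
  exact ⟨x, hsU fun i _ => hxs i, hx⟩

section exists_det

variable {R X : Type*} [CommRing R] [Nontrivial R]

theorem exists_det_ne_zero_of_linearIndependent_fin {n : ℕ} {g : Fin n → X → R}
    (hg : LinearIndependent R g) : ∃ x : Fin n → X, (Matrix.of fun i j => g j (x i)).det ≠ 0 := by
  induction n with
  | zero => exact ⟨Fin.elim0, by simp⟩
  | succ n ih =>
    obtain ⟨y, hy⟩ := ih (hg.comp Fin.succ (Fin.succ_injective n))
    by_contra! hdet
    let c (j : Fin (n + 1)) : R :=
      (-1) ^ (j : ℕ) * (Matrix.of fun (i k : Fin n) => g (j.succAbove k) (y i)).det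
    have hc : ∑ j, c j • g j = 0 := by
      ext x
      rw [Pi.zero_apply, ← hdet (Fin.cons x y), Matrix.det_succ_row_zero]
      simp only [Finset.sum_apply, Pi.smul_apply, smul_eq_mul, c]
      exact Finset.sum_congr rfl fun j _ => mul_right_comm ..
    have hc0 : c 0 = 0 := Fintype.linearIndependent_iff.mp hg c hc 0
    exact hy (by simpa [c] using hc0)

theorem exists_det_ne_zero_of_linearIndependent {ι : Type*} [Fintype ι] [DecidableEq ι]
    {g : ι → X → R} (hg : LinearIndependent R g) :
    ∃ x : ι → X, (Matrix.of fun i j => g j (x i)).det ≠ 0 := by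
  let e := Fintype.equivFin ι
  obtain ⟨x, hx⟩ := exists_det_ne_zero_of_linearIndependent_fin (hg.comp e.symm e.symm.injective)
  refine ⟨x ∘ e, ?_⟩
  rw [← Matrix.det_submatrix_equiv_self e] at hx
  simpa [Matrix.submatrix] using hx

end exists_det

theorem degree_hasseDeriv {R : Type*} [Semiring R] [IsAddTorsionFree R] {f : R[X]} (hf : f ≠ 0)
    {k : ℕ} (hk : k ≤ f.natDegree) : (hasseDeriv k f).degree = (f.natDegree - k : ℕ) := by
  refine degree_eq_of_le_of_coeff_ne_zero
    (degree_le_of_natDegree_le (natDegree_hasseDeriv_le f k)) ?_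
  rw [hasseDeriv_coeff, Nat.sub_add_cancel hk, ← nsmul_eq_mul]
  exact smul_ne_zero (Nat.choose_pos hk).ne' (leadingCoeff_ne_zero.mpr hf)

section translates

variable {R : Type*} [CommRing R] [IsDomain R]

theorem det_eval_ne_zero_of_degree_eq {n : ℕ} {p : Fin n → R[X]}
    (hp : ∀ j, (p j).degree = (j : ℕ)) {v : Fin n → R} (hv : Function.Injective v) :
    (Matrix.of fun i j => (p j).eval (v i)).det ≠ 0 := by
  have hnat (j : Fin n) : (p j).natDegree ≤ j := natDegree_le_of_degree_le (hp j).le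
  rw [Matrix.eval_matrixOfPolynomials_eq_vandermonde_mul_matrixOfPolynomials v p hnat,
    Matrix.det_mul,
    Matrix.det_of_isUpperTriangular (Matrix.matrixOfPolynomials_blockTriangular p hnat)]
  refine mul_ne_zero (Matrix.det_vandermonde_ne_zero_iff.mpr hv) ?_
  exact Finset.prod_ne_zero_iff.mpr fun j _ => coeff_ne_zero_of_eq_degree (hp j)

variable [CharZero R]

theorem linearIndependent_taylor_fin {n : ℕ} {f : R[X]} (hf : f ≠ 0) (hn : n ≤ f.natDegree + 1)
    {q : Fin n → R} (hq : Function.Injective q) :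
    LinearIndependent R fun j => taylor (q j) f := by
  refine Fintype.linearIndependent_iff.mpr fun c hc => congrFun ?_
  have hdeg (k : Fin n) : (hasseDeriv (f.natDegree - k) f).degree = (k : ℕ) := by
    rw [degree_hasseDeriv hf (Nat.sub_le _ _), Nat.sub_sub_self (by omega)]
  refine Matrix.eq_zero_of_vecMul_eq_zero (det_eval_ne_zero_of_degree_eq hdeg hq)
    (funext fun k => ?_)
  simpa [Matrix.vecMul, dotProduct, taylor_coeff] using congr(($hc).coeff (f.natDegree - k))

variable {ι : Type*} [Fintype ι] {f : R[X]} {q : ι → R}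

theorem linearIndependent_taylor (hf : f ≠ 0) (hcard : Fintype.card ι ≤ f.natDegree + 1)
    (hq : Function.Injective q) : LinearIndependent R fun j => taylor (q j) f :=
  let e := Fintype.equivFin ι
  (linearIndependent_equiv e.symm).mp <|
    linearIndependent_taylor_fin hf hcard (hq.comp e.symm.injective)

theorem linearIndependent_eval_sub (hf : f ≠ 0) (hcard : Fintype.card ι ≤ f.natDegree + 1)
    (hq : Function.Injective q) : LinearIndependent R fun j x => f.eval (x - q j) := by
  let evalₗ : R[X] →ₗ[R] R → R := LinearMap.pi leval
  have hker : evalₗ.ker = ⊥ :=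
    LinearMap.ker_eq_bot.mpr fun p r hpr => Polynomial.funext (congrFun hpr)
  have htranslate : (fun j x => f.eval (x - q j)) = evalₗ ∘ fun j => taylor (-q j) f := by
    ext j x
    simp only [Function.comp_apply, evalₗ, LinearMap.pi_apply, leval_apply, taylor_eval,
      sub_eq_add_neg]
  rw [htranslate]
  exact (linearIndependent_taylor hf hcard (neg_injective.comp hq)).map' evalₗ hker

theorem exists_det_eval_sub_ne_zero [DecidableEq ι]
    (hdeg : ((Fintype.card ι - 1 : ℕ) : WithBot ℕ) ≤ f.degree) (hq : Function.Injective q) :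
    ∃ q' : ι → R, (Matrix.of fun i j => f.eval (q' i - q j)).det ≠ 0 := by
  have hf : f ≠ 0 := by
    rintro rfl
    simp at hdeg
  have hcard : Fintype.card ι ≤ f.natDegree + 1 :=
    Nat.le_add_of_sub_le (le_natDegree_of_coe_le_degree hdeg)
  exact exists_det_ne_zero_of_linearIndependent (linearIndependent_eval_sub hf hcard hq)

end translates

theorem stmt18_general {R ι : Type*} [CommRing R] [IsDomain R] [CharZero R] [TopologicalSpace R]
    [T1Space R] [PerfectSpace R] [Fintype ι] [DecidableEq ι] (f : R[X])
    (hdeg : ((Fintype.card ι - 1 : ℕ) : WithBot ℕ) ≤ f.degree) :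
    Dense {q : ι → R | ∃ q' : ι → R, (Matrix.of fun i j => f.eval (q' i - q j)).det ≠ 0} :=
  dense_setOf_injective.mono fun _ hq => exists_det_eval_sub_ne_zero hdeg hq

/-- every real polynomial of degree ≥ n−1 is n-nondegenerate:
the set 𝒰ⁿ = {q ∈ ℝⁿ : ∃ q' ∈ ℝⁿ, det[(f(q'ᵢ − qⱼ))ᵢⱼ] ≠ 0} is dense in ℝⁿ. -/
theorem stmt18 (n : ℕ) (hn : 1 ≤ n) (f : Polynomial ℝ)
    (hdeg : ((n - 1 : ℕ) : WithBot ℕ) ≤ f.degree) :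
    Dense {q : Fin n → ℝ | ∃ q' : Fin n → ℝ,
      Matrix.det (Matrix.of fun i j : Fin n => f.eval (q' i - q j)) ≠ 0} :=
  stmt18_general f (by rwa [Fintype.card_fin])
end
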